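/- Let p be an odd prime, P a finite noncyclic p-group with cyclic center, and Z = Ω₁(Z(P)). If 𝒮 is a collection of at least two distinct maximal elements of ℳ_Z(P) = {X ≤ P : Z < X = Ω₁(X), [X,X] ≤ Z}, then the intersection Y = ⋂_{S ∈ 𝒮} S lies in ℳ_Z(P) and Y is not extraspecial. -/

import Mathlib

/-- `G` is extraspecial for the prime `p`: its center has order `p` and `G/Z(G)`
is elementary abelian (nontrivial, abelian of exponent `p`). -/
def IsExtraspecial (p : ℕ) (G : Type*) [Group G] : Prop :=
  Nat.card (Subgroup.center G) = p ∧
  Nontrivial (G ⧸ Subgroup.center G) ∧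
  (∀ a b : G ⧸ Subgroup.center G, a * b = b * a) ∧
  (∀ a : G ⧸ Subgroup.center G, a ^ p = 1)

/-!
For odd `n`, the identity `(u * v) ^ n = u ^ n * v ^ n * ⁅v, u⁆ ^ (n choose 2)` shows that `Ω₁` of a
group of class two with commutators in `Z` has exponent `n`.

In a nilpotent group, if a subgroup `D` contains some `y ∉ Z` with `y ^ n = 1`, then it contains
such an element that moreover centralizes `D` modulo `Z`: climb a subnormal chain from `⟨y⟩` to `D`.
At each step the elements of exponent `n` of the current term `H` that centralize `H` modulo `Z`
form a subgroup normalized by the next term, and those of its elements outside `Z` that lie lowest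
in the upper central series centralize the next term modulo `Z`. A maximal member of the family
absorbs every element of exponent `n` centralizing it modulo `Z`, so `D = P` gives `Z < Y`.

If the center of `Y` were `Z`, the commutator pairing would identify `Y / Z` with its dual, whence
`S ≤ Y * C(Y)` for every `S` in the collection. Some element of exponent `n` in `C(Y)` lies outside
`Z` because `S ≠ Y` for some `S`, so `D = C(Y)` yields an element absorbed by every `S`, that is, an
element of `Y ⊓ C(Y)` outside `Z`.
-/

open Subgroup
open scoped commutatorElement

section ClassTwoPowers

variable {G : Type*} [Group G] {n : ℕ}

theorem pow_mul_eq_mul_pow_mul_commutator_pow {u v : G} (hv : Commute ⁅v, u⁆ v)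
    (hu : Commute ⁅v, u⁆ u) (n : ℕ) : v ^ n * u = u * v ^ n * ⁅v, u⁆ ^ n := by
  have hvu : v * u = u * v * ⁅v, u⁆ := by
    rw [← (hu.mul_right hv).eq, commutatorElement_def]; group
  induction n with
  | zero => simp
  | succ k ih =>
    calc v ^ (k + 1) * u = v * u * v ^ k * ⁅v, u⁆ ^ k := by
          rw [pow_succ', mul_assoc, ih]; simp only [mul_assoc]
      _ = u * v * (⁅v, u⁆ * v ^ k) * ⁅v, u⁆ ^ k := by rw [hvu]; simp only [mul_assoc]
      _ = u * v ^ (k + 1) * ⁅v, u⁆ ^ (k + 1) := by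
          rw [(hv.pow_right k).eq, pow_succ' v, pow_succ' ⁅v, u⁆]; simp only [mul_assoc]

theorem mul_pow_eq_mul_commutator_pow_choose_two {u v : G} (hv : Commute ⁅v, u⁆ v)
    (hu : Commute ⁅v, u⁆ u) (n : ℕ) :
    (u * v) ^ n = u ^ n * v ^ n * ⁅v, u⁆ ^ n.choose 2 := by
  induction n with
  | zero => simp
  | succ k ih =>
    calc (u * v) ^ (k + 1) = u ^ k * v ^ k * (⁅v, u⁆ ^ k.choose 2 * (u * v)) := by
          rw [pow_succ, ih, mul_assoc]
      _ = u ^ k * (v ^ k * u) * v * ⁅v, u⁆ ^ k.choose 2 := by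
          rw [((hu.mul_right hv).pow_left _).eq]; simp only [mul_assoc]
      _ = u ^ (k + 1) * v ^ k * (⁅v, u⁆ ^ k * v) * ⁅v, u⁆ ^ k.choose 2 := by
          rw [pow_mul_eq_mul_pow_mul_commutator_pow hv hu, pow_succ u]; simp only [mul_assoc]
      _ = u ^ (k + 1) * v ^ (k + 1) * ⁅v, u⁆ ^ (k + 1).choose 2 := by
          rw [(hv.pow_left k).eq, pow_succ v, Nat.choose_succ_succ' k 1, Nat.choose_one_right,
            pow_add ⁅v, u⁆]
          simp only [mul_assoc]

theorem dvd_choose_two_of_odd (hn : Odd n) : n ∣ n.choose 2 := by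
  obtain ⟨k, rfl⟩ := hn
  refine ⟨k, ?_⟩
  rw [Nat.choose_two_right, Nat.add_sub_cancel]
  exact Nat.div_eq_of_eq_mul_left two_pos (by ring)

theorem mul_pow_of_odd (hn : Odd n) {u v : G} (hv : Commute ⁅v, u⁆ v) (hu : Commute ⁅v, u⁆ u)
    (hvu : ⁅v, u⁆ ^ n = 1) : (u * v) ^ n = u ^ n * v ^ n := by
  obtain ⟨k, hk⟩ := dvd_choose_two_of_odd hn
  rw [mul_pow_eq_mul_commutator_pow_choose_two hv hu, hk, pow_mul, hvu, one_pow, mul_one]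

end ClassTwoPowers

section OmegaSubgroup

variable {G : Type*} [Group G] {n : ℕ}

/-- The subgroup generated by the elements `x ∈ X` with `x ^ n = 1`; for `n = p` prime and `X` a
`p`-group this is `Ω₁(X)`, formed inside the ambient group. -/
def omegaSubgroup (n : ℕ) (X : Subgroup G) : Subgroup G :=
  closure {x | x ∈ X ∧ x ^ n = 1}

theorem mem_omegaSubgroup {X : Subgroup G} {x : G} (hx : x ∈ X) (hxn : x ^ n = 1) :
    x ∈ omegaSubgroup n X :=
  subset_closure ⟨hx, hxn⟩

theorem omegaSubgroup_le (n : ℕ) (X : Subgroup G) : omegaSubgroup n X ≤ X :=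
  (closure_le X).2 fun _ hx => hx.1

theorem omegaSubgroup_mono (n : ℕ) {X Y : Subgroup G} (h : X ≤ Y) :
    omegaSubgroup n X ≤ omegaSubgroup n Y :=
  closure_mono fun _ hx => ⟨h hx.1, hx.2⟩

theorem mem_omegaSubgroup_iff (hn : Odd n) {X Z : Subgroup G} (hZ : Z ≤ center G)
    (hZn : ∀ z ∈ Z, z ^ n = 1) (hX : ⁅X, X⁆ ≤ Z) {x : G} :
    x ∈ omegaSubgroup n X ↔ x ∈ X ∧ x ^ n = 1 := by
  refine ⟨fun hx => ⟨omegaSubgroup_le n X hx, ?_⟩, fun hx => mem_omegaSubgroup hx.1 hx.2⟩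
  induction hx using closure_induction with
  | mem x hx => exact hx.2
  | one => exact one_pow n
  | inv x _ hx => rw [inv_pow, hx, inv_one]
  | mul x y hxX hyX hx hy =>
    have hyx : ⁅y, x⁆ ∈ Z :=
      hX (commutator_mem_commutator (omegaSubgroup_le n X hyX) (omegaSubgroup_le n X hxX))
    have hcomm (g : G) : Commute ⁅y, x⁆ g := (mem_center_iff.1 (hZ hyx) g).symm
    rw [mul_pow_of_odd hn (hcomm y) (hcomm x) (hZn _ hyx), hx, hy, one_mul]

theorem normalizer_le_normalizer_omegaSubgroup (n : ℕ) (X : Subgroup G) :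
    normalizer (X : Set G) ≤ normalizer (omegaSubgroup n X : Set G) := by
  refine le_normalizer_iff.2 fun g hg => ?_
  suffices omegaSubgroup n X ≤ (omegaSubgroup n X).comap (MulAut.conj g).toMonoidHom from
    fun x hx => this hx
  refine (closure_le _).2 fun x hx => ?_
  refine mem_omegaSubgroup ((mem_normalizer_iff.1 hg x).1 hx.1) ?_
  simp [hx.2]

end OmegaSubgroup

section CentralizerMod

variable {G : Type*} [Group G]

/-- The centralizer of `H` modulo `Z`: the preimage in `G` of the centralizer of `HZ/Z` in `G/Z`. -/
def centralizerMod (Z : Subgroup G) [Z.Normal] (H : Subgroup G) : Subgroup G :=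
  (centralizer (H.map (QuotientGroup.mk' Z) : Set (G ⧸ Z))).comap (QuotientGroup.mk' Z)

theorem mem_centralizerMod {Z H : Subgroup G} [Z.Normal] {g : G} :
    g ∈ centralizerMod Z H ↔ ∀ h ∈ H, ⁅h, g⁆ ∈ Z := by
  simp [centralizerMod, mem_centralizer_iff_commutator_eq_one, ← QuotientGroup.eq_one_iff,
    commutatorElement_def]

theorem le_centralizerMod_iff {Z H K : Subgroup G} [Z.Normal] :
    K ≤ centralizerMod Z H ↔ ⁅K, H⁆ ≤ Z := by
  rw [commutator_comm, commutator_le]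
  exact ⟨fun h x hx y hy => mem_centralizerMod.1 (h hy) x hx,
    fun h y hy => mem_centralizerMod.2 fun x hx => h x hx y hy⟩

theorem commutator_sup_le {H K L Z : Subgroup G} [Z.Normal] (hH : ⁅H, L⁆ ≤ Z) (hK : ⁅K, L⁆ ≤ Z) :
    ⁅H ⊔ K, L⁆ ≤ Z :=
  le_centralizerMod_iff.1 (sup_le (le_centralizerMod_iff.2 hH) (le_centralizerMod_iff.2 hK))

theorem normalizer_le_normalizer_centralizerMod (Z H : Subgroup G) [Z.Normal] :
    normalizer (H : Set G) ≤ normalizer (centralizerMod Z H : Set G) := by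
  refine le_normalizer_iff.2 fun g hg x hx => mem_centralizerMod.2 fun h hh => ?_
  have hconj : g⁻¹ * h * g ∈ H := (mem_normalizer_iff''.1 hg h).1 hh
  have := ‹Z.Normal›.conj_mem _ (mem_centralizerMod.1 hx _ hconj) g
  rwa [conjugate_commutatorElement, show g * (g⁻¹ * h * g) * g⁻¹ = h by group] at this

theorem normal_of_le_center {Z : Subgroup G} (hZ : Z ≤ center G) : Z.Normal :=
  ⟨fun z hz g => by rwa [mem_center_iff.1 (hZ hz) g, mul_inv_cancel_right]⟩

end CentralizerMod

section Nilpotent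

theorem upperCentralSeries_succ_le_normalizer_of_le {G : Type*} [Group G] {H : Subgroup G} {i : ℕ}
    (hH : Subgroup.upperCentralSeries G i ≤ H) :
    Subgroup.upperCentralSeries G (i + 1) ≤ normalizer (H : Set G) :=
  le_normalizer_iff_commutator_le_right.2 <| commutator_le.2 fun _ hu h _ =>
    hH (Subgroup.mem_upperCentralSeries_succ_iff.1 hu h)

variable {G : Type*} [Group G] [Group.IsNilpotent G] {n : ℕ} {Z : Subgroup G}

theorem exists_mem_notMem_forall_commutator_mem {E N : Subgroup G}
    (hN : N ≤ normalizer (E : Set G)) (hEZ : ¬ E ≤ Z) :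
    ∃ x ∈ E, x ∉ Z ∧ ∀ g ∈ N, ⁅g, x⁆ ∈ Z := by
  obtain ⟨x₀, hx₀E, hx₀Z⟩ := SetLike.not_le_iff_exists.1 hEZ
  obtain ⟨c, hc⟩ := Group.IsNilpotent.nilpotent G
  have hlevel : ∃ i, ∃ x ∈ E, x ∉ Z ∧ x ∈ Subgroup.upperCentralSeries G i :=
    ⟨c, x₀, hx₀E, hx₀Z, hc ▸ mem_top x₀⟩
  classical
  obtain ⟨x, hxE, hxZ, hx⟩ := Nat.find_spec hlevel
  refine ⟨x, hxE, hxZ, fun g hg => by_contra fun hgx => ?_⟩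
  have hgxE : ⁅g, x⁆ ∈ E := E.mul_mem (le_normalizer_iff.1 hN g hg x hxE) (E.inv_mem hxE)
  cases hi : Nat.find hlevel with
  | zero =>
    rw [hi, Subgroup.upperCentralSeries_zero, mem_bot] at hx
    exact hxZ (hx ▸ Z.one_mem)
  | succ i =>
    rw [hi] at hx
    have hgxi : ⁅g, x⁆ ∈ Subgroup.upperCentralSeries G i := by
      rw [← commutatorElement_inv]
      exact inv_mem (Subgroup.mem_upperCentralSeries_succ_iff.1 hx g)
    exact Nat.find_min hlevel (hi ▸ i.lt_succ_self) ⟨_, hgxE, hgx, hgxi⟩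

theorem exists_pow_eq_one_forall_commutator_mem_of_le_normalizer (hn : Odd n)
    (hZ : Z ≤ center G) (hZn : ∀ z ∈ Z, z ^ n = 1) {H K : Subgroup G} (hHK : H ≤ K)
    (hK : K ≤ normalizer (H : Set G))
    (h : ∃ x ∈ H, x ∉ Z ∧ x ^ n = 1 ∧ ∀ g ∈ H, ⁅g, x⁆ ∈ Z) :
    ∃ x ∈ K, x ∉ Z ∧ x ^ n = 1 ∧ ∀ g ∈ K, ⁅g, x⁆ ∈ Z := by
  have := normal_of_le_center hZ
  let C := H ⊓ centralizerMod Z H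
  have hCC : ⁅C, C⁆ ≤ Z :=
    (commutator_mono inf_le_right inf_le_left).trans (le_centralizerMod_iff.1 le_rfl)
  have hKE : K ≤ normalizer (omegaSubgroup n C : Set G) :=
    hK.trans <| (le_inf le_rfl (normalizer_le_normalizer_centralizerMod Z H)).trans <|
      inf_normalizer_le_normalizer_inf.trans (normalizer_le_normalizer_omegaSubgroup n C)
  obtain ⟨y, hyH, hyZ, hyn, hy⟩ := h
  have hEZ : ¬ omegaSubgroup n C ≤ Z := fun hle =>
    hyZ (hle (mem_omegaSubgroup ⟨hyH, mem_centralizerMod.2 hy⟩ hyn))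
  obtain ⟨x, hxE, hxZ, hx⟩ := exists_mem_notMem_forall_commutator_mem hKE hEZ
  obtain ⟨hxC, hxn⟩ := (mem_omegaSubgroup_iff hn hZ hZn hCC).1 hxE
  exact ⟨x, hHK hxC.1, hxZ, hxn, hx⟩

theorem exists_pow_eq_one_forall_commutator_mem (hn : Odd n) (hZ : Z ≤ center G)
    (hZn : ∀ z ∈ Z, z ^ n = 1) {D : Subgroup G} (hD : ∃ y ∈ D, y ∉ Z ∧ y ^ n = 1) :
    ∃ x ∈ D, x ∉ Z ∧ x ^ n = 1 ∧ ∀ g ∈ D, ⁅g, x⁆ ∈ Z := by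
  obtain ⟨y, hyD, hyZ, hyn⟩ := hD
  let K (i : ℕ) : Subgroup G := D ⊓ (zpowers y ⊔ Subgroup.upperCentralSeries G i)
  have hmono (i : ℕ) : K i ≤ K (i + 1) :=
    inf_le_inf_left D (sup_le_sup_left (Subgroup.upperCentralSeries_mono G i.le_succ) _)
  have hnorm (i : ℕ) : K (i + 1) ≤ normalizer (K i : Set G) :=
    (inf_le_inf le_normalizer <| sup_le (le_sup_left.trans le_normalizer) <|
      upperCentralSeries_succ_le_normalizer_of_le le_sup_right).trans
        inf_normalizer_le_normalizer_inf
  have hK (i : ℕ) : ∃ x ∈ K i, x ∉ Z ∧ x ^ n = 1 ∧ ∀ g ∈ K i, ⁅g, x⁆ ∈ Z := by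
    induction i with
    | zero =>
      refine ⟨y, ⟨hyD, mem_sup_left (mem_zpowers y)⟩, hyZ, hyn, fun g hg => ?_⟩
      have hgy : g ∈ zpowers y := by simpa using hg.2
      rw [commutatorElement_eq_one_iff_commute.2]
      · exact Z.one_mem
      · obtain ⟨k, rfl⟩ := mem_zpowers_iff.1 hgy
        exact (Commute.refl y).zpow_left k
    | succ i ih =>
      exact exists_pow_eq_one_forall_commutator_mem_of_le_normalizer hn hZ hZn
        (hmono i) (hnorm i) ih
  obtain ⟨c, hc⟩ := Group.IsNilpotent.nilpotent G
  simpa [K, hc] using hK c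

end Nilpotent

section Duality

theorem exists_injective_monoidHom_complexUnits (C : Type*) [CommGroup C] [IsCyclic C] [Finite C] :
    ∃ ι : C →* ℂˣ, Function.Injective ι := by
  have hcard : Nat.card C = Nat.card (rootsOfUnity (Nat.card C) ℂ) :=
    (HasEnoughRootsOfUnity.natCard_rootsOfUnity ℂ (Nat.card C)).symm
  let e := mulEquivOfCyclicCardEq hcard
  exact ⟨(rootsOfUnity (Nat.card C) ℂ).subtype.comp e.toMonoidHom,
    Subtype.val_injective.comp e.injective⟩

theorem card_monoidHom_le_card (A C : Type*) [CommGroup A] [Finite A] [CommGroup C] [IsCyclic C]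
    [Finite C] : Nat.card (A →* C) ≤ Nat.card A := by
  obtain ⟨ι, hι⟩ := exists_injective_monoidHom_complexUnits C
  rw [← CommGroup.card_monoidHom_of_hasEnoughRootsOfUnity A ℂ]
  exact Nat.card_le_card_of_injective ι.comp fun f g hfg => (MonoidHom.cancel_left hι).1 hfg

theorem mem_range_of_ker_le_ker {Y C : Type*} [Group Y] [Finite Y] [CommGroup C] [IsCyclic C]
    [Finite C] {B : Y →* Y →* C} (hB : ∀ y, B.ker ≤ (B y).ker) {χ : Y →* C}
    (hχ : B.ker ≤ χ.ker) : χ ∈ B.range := by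
  have : Finite B.range := .of_surjective _ B.rangeRestrict_surjective
  have : Finite (B.range →* C) := .of_injective _ DFunLike.coe_injective
  -- `range B` lies in the dual of `Y / ker B ≃ range B`, which has no more elements than `range B`.
  let inflate : (B.range →* C) →* Y →* C := MonoidHom.compHom' B.rangeRestrict
  have hmem (ψ : Y →* C) (hψ : B.ker ≤ ψ.ker) : ψ ∈ inflate.range :=
    ⟨B.rangeRestrict.liftOfSurjective B.rangeRestrict_surjective
      ⟨ψ, by rwa [MonoidHom.ker_rangeRestrict]⟩,
      MonoidHom.liftOfRightInverse_comp _ _ (Function.rightInverse_surjInv _) _⟩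
  have hle : B.range ≤ inflate.range := by
    rintro _ ⟨y, rfl⟩
    exact hmem (B y) (hB y)
  have : Finite inflate.range := .of_surjective _ inflate.rangeRestrict_surjective
  have hcard : Nat.card inflate.range ≤ Nat.card B.range :=
    (Nat.card_le_card_of_surjective _ inflate.rangeRestrict_surjective).trans
      (card_monoidHom_le_card B.range C)
  exact eq_of_le_of_card_ge hle hcard ▸ hmem χ hχ

end Duality

section CommutatorPairing

open scoped IsMulCommutative

variable {G : Type*} [Group G] {S Y Z : Subgroup G}

theorem commutatorElement_mul_right_of_mem_center {s x y : G} (h : ⁅s, y⁆ ∈ center G) :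
    ⁅s, x * y⁆ = ⁅s, x⁆ * ⁅s, y⁆ := by
  rw [commutatorElement_mul_right_eq_mul_conj, mul_assoc ⁅s, x⁆, mul_assoc ⁅s, x⁆,
    mem_center_iff.1 h x, mul_inv_cancel_right]

theorem commutatorElement_mul_left_of_mem_center {s t y : G} (h : ⁅t, y⁆ ∈ center G) :
    ⁅s * t, y⁆ = ⁅s, y⁆ * ⁅t, y⁆ := by
  rw [commutatorElement_mul_left_eq_conj_mul, mem_center_iff.1 h s, mul_inv_cancel_right,
    mem_center_iff.1 h]

/-- The commutator `⁅s, y⁆` as a bimultiplicative pairing of `S` and `Y` with values in the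
central subgroup `Z`. -/
def commutatorPairing [IsMulCommutative Z] (hZ : Z ≤ center G) (hSY : ⁅S, Y⁆ ≤ Z) :
    S →* Y →* Z :=
  have hmem (s : S) (y : Y) : ⁅(s : G), (y : G)⁆ ∈ Z :=
    hSY (commutator_mem_commutator s.2 y.2)
  MonoidHom.mk' (fun s => MonoidHom.mk' (fun y => ⟨⁅(s : G), (y : G)⁆, hmem s y⟩)
      fun _ y => Subtype.ext <| commutatorElement_mul_right_of_mem_center (hZ (hmem s y)))
    fun _ t => MonoidHom.ext fun y => Subtype.ext <|
      commutatorElement_mul_left_of_mem_center (hZ (hmem t y))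

theorem coe_commutatorPairing [IsMulCommutative Z] (hZ : Z ≤ center G) (hSY : ⁅S, Y⁆ ≤ Z)
    (s : S) (y : Y) :
    (commutatorPairing hZ hSY s y : G) = ⁅(s : G), (y : G)⁆ :=
  rfl

theorem mem_ker_commutatorPairing [IsMulCommutative Z] (hZ : Z ≤ center G) (hSY : ⁅S, Y⁆ ≤ Z)
    {s : S} : s ∈ (commutatorPairing hZ hSY).ker ↔ (s : G) ∈ centralizer (Y : Set G) := by
  simp only [MonoidHom.mem_ker, MonoidHom.ext_iff, Subtype.ext_iff, coe_commutatorPairing,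
    mem_centralizer_iff, Subtype.forall, MonoidHom.one_apply, coe_one,
    commutatorElement_eq_one_iff_mul_comm, SetLike.mem_coe, eq_comm]

theorem exists_mul_eq_of_commutator_le [Finite Y] [IsCyclic Z] [Finite Z] (hZ : Z ≤ center G)
    (hYS : Y ≤ S) (hSY : ⁅S, Y⁆ ≤ Z) (hcenter : Y ⊓ centralizer Y ≤ centralizer S) {s : G}
    (hs : s ∈ S) : ∃ y ∈ Y, ∃ d ∈ centralizer (Y : Set G), y * d = s := by
  let F := commutatorPairing hZ hSY
  let B := F.comp (inclusion hYS)
  have hker (t : S) : B.ker ≤ (F t).ker := fun y hy => Subtype.ext <| by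
    have hyY : (y : G) ∈ centralizer Y := (mem_ker_commutatorPairing hZ hSY).1 hy
    exact commutatorElement_eq_one_iff_mul_comm.2
      (mem_centralizer_iff.1 (hcenter ⟨y.2, hyY⟩) t t.2)
  obtain ⟨y, hy⟩ := mem_range_of_ker_le_ker (fun y => hker (inclusion hYS y)) (hker ⟨s, hs⟩)
  have hd : (inclusion hYS y)⁻¹ * ⟨s, hs⟩ ∈ F.ker := F.eq_iff.1 hy.symm
  exact ⟨y, y.2, _, (mem_ker_commutatorPairing hZ hSY).1 hd, mul_inv_cancel_left _ _⟩

end CommutatorPairing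

section OmegaFamily

variable {G : Type*} [Group G] {n : ℕ} {Z : Subgroup G}

/-- The family `ℳ_Z(P)` of the theorem, with an arbitrary exponent `n` in place of the prime `p`. -/
def omegaFamily (n : ℕ) (Z : Subgroup G) : Set (Subgroup G) :=
  {X | Z < X ∧ X = omegaSubgroup n X ∧ ⁅X, X⁆ ≤ Z}

theorem pow_eq_one_of_mem_omegaFamily (hn : Odd n) (hZ : Z ≤ center G) (hZn : ∀ z ∈ Z, z ^ n = 1)
    {X : Subgroup G} (hX : X ∈ omegaFamily n Z) {x : G} (hx : x ∈ X) : x ^ n = 1 :=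
  ((mem_omegaSubgroup_iff hn hZ hZn hX.2.2).1 (hX.2.1.le hx)).2

theorem mem_of_maximal_omegaFamily (hZ : Z ≤ center G) {S : Subgroup G}
    (hS : Maximal (· ∈ omegaFamily n Z) S) {x : G} (hxn : x ^ n = 1)
    (hx : ∀ s ∈ S, ⁅s, x⁆ ∈ Z) : x ∈ S := by
  have := normal_of_le_center hZ
  obtain ⟨hZS, hSΩ, hSS⟩ := hS.prop
  let T := S ⊔ zpowers x
  have hST : S ≤ T := le_sup_left
  have hxT : x ∈ T := mem_sup_right (mem_zpowers x)
  have hTΩ : T ≤ omegaSubgroup n T :=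
    sup_le (hSΩ.trans_le (omegaSubgroup_mono n hST)) (zpowers_le.2 (mem_omegaSubgroup hxT hxn))
  have hxS : ⁅zpowers x, S⁆ ≤ Z :=
    le_centralizerMod_iff.1 (zpowers_le.2 (mem_centralizerMod.2 hx))
  have hxx : ⁅zpowers x, zpowers x⁆ ≤ Z :=
    (commutator_self_eq_bot_iff.2 inferInstance).trans_le bot_le
  have hTS : ⁅T, S⁆ ≤ Z := commutator_sup_le hSS hxS
  have hTx : ⁅T, zpowers x⁆ ≤ Z := commutator_sup_le ((commutator_comm _ _).trans_le hxS) hxx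
  have hTT : ⁅T, T⁆ ≤ Z :=
    commutator_sup_le ((commutator_comm _ _).trans_le hTS) ((commutator_comm _ _).trans_le hTx)
  have hT : T ∈ omegaFamily n Z := ⟨hZS.trans_le hST, hTΩ.antisymm (omegaSubgroup_le n T), hTT⟩
  exact hS.le_of_ge hT hST hxT

theorem sInf_mem_omegaFamily [Group.IsNilpotent G] (hn : Odd n) (hZ : Z ≤ center G)
    (hZn : ∀ z ∈ Z, z ^ n = 1) {𝒮 : Set (Subgroup G)}
    (h𝒮 : ∀ S ∈ 𝒮, Maximal (· ∈ omegaFamily n Z) S) (hne : 𝒮.Nonempty) :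
    sInf 𝒮 ∈ omegaFamily n Z := by
  obtain ⟨S₀, hS₀⟩ := hne
  have hle : sInf 𝒮 ≤ S₀ := sInf_le hS₀
  have hS₀mem := (h𝒮 S₀ hS₀).prop
  have hpow {x : G} (hx : x ∈ S₀) : x ^ n = 1 :=
    pow_eq_one_of_mem_omegaFamily hn hZ hZn hS₀mem hx
  obtain ⟨y, hyS₀, hyZ⟩ := SetLike.exists_of_lt hS₀mem.1
  obtain ⟨x, -, hxZ, hxn, hx⟩ := exists_pow_eq_one_forall_commutator_mem hn hZ hZn (D := ⊤)
    ⟨y, mem_top y, hyZ, hpow hyS₀⟩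
  have hxY : x ∈ sInf 𝒮 := mem_sInf.2 fun S hS =>
    mem_of_maximal_omegaFamily hZ (h𝒮 S hS) hxn fun s _ => hx s (mem_top s)
  have hZY : Z ≤ sInf 𝒮 := le_sInf fun S hS => (h𝒮 S hS).prop.1.le
  exact ⟨SetLike.lt_iff_le_and_exists.2 ⟨hZY, x, hxY, hxZ⟩,
    le_antisymm (fun y hy => mem_omegaSubgroup hy (hpow (hle hy))) (omegaSubgroup_le n _),
    (commutator_mono hle hle).trans hS₀mem.2.2⟩

theorem exists_mem_not_le_sInf {α : Type*} [CompleteLattice α] {s : Set α} (hs : s.Nontrivial) :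
    ∃ a ∈ s, ¬ a ≤ sInf s := by
  obtain ⟨a, ha, b, hb, hab⟩ := hs
  by_contra! h
  exact hab (((h a ha).trans (sInf_le hb)).antisymm ((h b hb).trans (sInf_le ha)))

theorem lt_sInf_inf_centralizer [Group.IsNilpotent G] (hn : Odd n) [IsCyclic Z]
    (hZ : Z ≤ center G) (hZn : ∀ z ∈ Z, z ^ n = 1) {𝒮 : Set (Subgroup G)}
    (h𝒮 : ∀ S ∈ 𝒮, Maximal (· ∈ omegaFamily n Z) S) (htwo : 𝒮.Nontrivial)
    [Finite ↥(sInf 𝒮)] : Z < sInf 𝒮 ⊓ centralizer (sInf 𝒮 : Subgroup G) := by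
  set Y := sInf 𝒮
  have hZY : Z ≤ Y := le_sInf fun S hS => (h𝒮 S hS).prop.1.le
  have hYS {S} (hS : S ∈ 𝒮) : Y ≤ S := sInf_le hS
  refine (le_inf hZY (hZ.trans (center_le_centralizer _))).lt_of_not_ge fun hcenter => ?_
  have hfactor {S} (hS : S ∈ 𝒮) {s : G} (hs : s ∈ S) :
      ∃ y ∈ Y, ∃ d ∈ centralizer (Y : Set G), y * d = s := by
    have : Finite Z := .of_injective _ (inclusion_injective hZY)
    exact exists_mul_eq_of_commutator_le hZ (hYS hS)
      ((commutator_mono le_rfl (hYS hS)).trans (h𝒮 S hS).prop.2.2)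
      (hcenter.trans (hZ.trans (center_le_centralizer _))) hs
  obtain ⟨d, hdY, hdZ, hdn⟩ : ∃ d ∈ centralizer (Y : Set G), d ∉ Z ∧ d ^ n = 1 := by
    obtain ⟨S, hS, hSY⟩ : ∃ S ∈ 𝒮, ¬ S ≤ Y := exists_mem_not_le_sInf htwo
    obtain ⟨s, hsS, hsY⟩ := SetLike.not_le_iff_exists.1 hSY
    obtain ⟨y, hyY, d, hdY, rfl⟩ := hfactor hS hsS
    have hdS : d ∈ S := (S.mul_mem_cancel_left (hYS hS hyY)).1 hsS
    exact ⟨d, hdY, fun hdZ => hsY (mul_mem hyY (hZY hdZ)),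
      pow_eq_one_of_mem_omegaFamily hn hZ hZn (h𝒮 S hS).prop hdS⟩
  obtain ⟨x, hxY, hxZ, hxn, hx⟩ :=
    exists_pow_eq_one_forall_commutator_mem hn hZ hZn ⟨d, hdY, hdZ, hdn⟩
  have hxmem {S} (hS : S ∈ 𝒮) : x ∈ S := by
    refine mem_of_maximal_omegaFamily hZ (h𝒮 S hS) hxn fun s hs => ?_
    obtain ⟨y, hyY, c, hcY, rfl⟩ := hfactor hS hs
    have hyx : ⁅y, x⁆ = 1 :=
      commutatorElement_eq_one_iff_mul_comm.2 (mem_centralizer_iff.1 hxY y hyY)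
    rw [commutatorElement_mul_left_of_mem_center (hZ (hx c hcY)), hyx, one_mul]
    exact hx c hcY
  exact hxZ (hcenter ⟨mem_sInf.2 fun S hS => hxmem hS, hxY⟩)

theorem map_subtype_center (H : Subgroup G) :
    (center H).map H.subtype = H ⊓ centralizer (H : Set G) := by
  ext x
  simp [mem_map, mem_center_iff, mem_centralizer_iff, Subtype.ext_iff, and_comm]

theorem stmt_11_general [Group.IsNilpotent G] (hn : Odd n) [IsCyclic Z]
    (hZ : Z ≤ center G) (hZn : ∀ z ∈ Z, z ^ n = 1) {𝒮 : Set (Subgroup G)}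
    (h𝒮 : ∀ S ∈ 𝒮, Maximal (· ∈ omegaFamily n Z) S) (htwo : 𝒮.Nontrivial)
    [Finite ↥(sInf 𝒮)] :
    sInf 𝒮 ∈ omegaFamily n Z ∧ Z < (center ↥(sInf 𝒮)).map (sInf 𝒮).subtype :=
  ⟨sInf_mem_omegaFamily hn hZ hZn h𝒮 htwo.nonempty,
    map_subtype_center (sInf 𝒮) ▸ lt_sInf_inf_centralizer hn hZ hZn h𝒮 htwo⟩

end OmegaFamily

section Extraspecial

variable {G : Type*} [Group G] {p : ℕ}

theorem omegaSubgroup_ne_bot [Fact p.Prime] {X : Subgroup G} [Finite X] [Nontrivial X]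
    (hX : IsPGroup p X) : omegaSubgroup p X ≠ ⊥ := by
  have hdvd : p ∣ Nat.card X := hX.card_eq_or_dvd.resolve_left Finite.one_lt_card.ne'
  obtain ⟨x, hx⟩ := exists_prime_orderOf_dvd_card' p hdvd
  have hxp : (x : G) ^ p = 1 := by rw [← coe_pow, ← hx, pow_orderOf_eq_one, coe_one]
  refine ne_bot_iff_exists_ne_one.2 ⟨⟨x, mem_omegaSubgroup x.2 hxp⟩, fun h => ?_⟩
  have hx1 : x = 1 := Subtype.ext (congrArg ((↑) : omegaSubgroup p X → G) h)
  exact (Fact.out : p.Prime).ne_one (by rw [← hx, hx1, orderOf_one])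

theorem not_isExtraspecial_of_lt_map_center (hp : p.Prime) {Y Z : Subgroup G} (hZ : Z ≠ ⊥)
    (hZY : Z < (center Y).map Y.subtype) : ¬ IsExtraspecial p Y := by
  rintro ⟨hcard, -⟩
  rw [← card_subtype] at hcard
  have := Nat.finite_of_card_ne_zero (hcard.trans_ne hp.ne_zero)
  rcases hp.eq_one_or_self_of_dvd _ (hcard ▸ card_dvd_of_le hZY.le) with hone | hself
  · exact hZ (card_eq_one.1 hone)
  · exact hZY.ne (eq_of_le_of_card_ge hZY.le (hcard.trans hself.symm).le)

end Extraspecial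

/-- Let `p` be an odd prime, `P` a finite noncyclic `p`-group with cyclic center,
`Z = Ω₁(Z(P))`. If `𝒮` is a collection of at least two distinct maximal elements
of `ℳ_Z(P) = {X ≤ P : Z < X = Ω₁(X), [X,X] ≤ Z}`, then `Y = ⋂_{S ∈ 𝒮} S` lies in
`ℳ_Z(P)` and `Y` is not extraspecial. -/
theorem stmt_11 {p : ℕ} (hp : p.Prime) (hodd : Odd p)
    {P : Type*} [Group P] [Finite P] (hP : IsPGroup p P) (hnc : ¬ IsCyclic P)
    (hcyc : IsCyclic (Subgroup.center P))
    (Z : Subgroup P)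
    (hZ : Z = Subgroup.closure {x : P | x ∈ Subgroup.center P ∧ x ^ p = 1})
    (𝒮 : Set (Subgroup P))
    (h𝒮 : ∀ S ∈ 𝒮, (Z < S ∧ S = Subgroup.closure {x : P | x ∈ S ∧ x ^ p = 1} ∧
        ⁅S, S⁆ ≤ Z) ∧
      (∀ T : Subgroup P, Z < T →
        T = Subgroup.closure {x : P | x ∈ T ∧ x ^ p = 1} →
        ⁅T, T⁆ ≤ Z → S ≤ T → T = S))
    (htwo : ∃ S ∈ 𝒮, ∃ T ∈ 𝒮, S ≠ T) :
    (Z < sInf 𝒮 ∧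
      sInf 𝒮 = Subgroup.closure {x : P | x ∈ sInf 𝒮 ∧ x ^ p = 1} ∧
      ⁅sInf 𝒮, sInf 𝒮⁆ ≤ Z) ∧
    ¬ IsExtraspecial p ↥(sInf 𝒮) := by
  have : Fact p.Prime := ⟨hp⟩
  have : Group.IsNilpotent P := hP.isNilpotent
  have : Nontrivial P := .of_not_isCyclic hnc
  have : Nontrivial (center P) := hP.center_nontrivial
  change Z = omegaSubgroup p (center P) at hZ
  have hZcenter : Z ≤ center P := hZ ▸ omegaSubgroup_le p _
  have hZcyclic : IsCyclic Z := isCyclic_of_le hZcenter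
  have hZexp : ∀ z ∈ Z, z ^ p = 1 := fun z hz =>
    ((mem_omegaSubgroup_iff hodd (Z := ⊥) bot_le (by simp) (by simp)).1 (hZ ▸ hz)).2
  have hmax : ∀ S ∈ 𝒮, Maximal (· ∈ omegaFamily p Z) S := fun S hS =>
    ⟨(h𝒮 S hS).1, fun T ⟨hZT, hTΩ, hTT⟩ hST => ((h𝒮 S hS).2 T hZT hTΩ hTT hST).le⟩
  obtain ⟨hY, hlt⟩ := stmt_11_general hodd hZcenter hZexp hmax htwo
  have hZbot : Z ≠ ⊥ := hZ ▸ omegaSubgroup_ne_bot (hP.to_subgroup _)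
  exact ⟨hY, not_isExtraspecial_of_lt_map_center hp hZbot hlt⟩
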